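/- arXiv:2411.07090 — 5 statements merged into one kernel-verified Lean document; each statement's English description precedes it below -/
import Mathlib

section
/- Let r ≥ 3 and let n ≥ (r-1)(2r+1)/2 be an integer. If H is an n-vertex T_r-free r-graph with minimum positive codegree δ⁺_{r-1}(H) > 2n/(2r+1), then H is r-partite. -/
variable {V : Type*} [Fintype V] [DecidableEq V]

/-- The (r-1)-shadow of an r-graph: all (r-1)-sets contained in some edge. -/
def sshadow (r : ℕ) (H : Finset (Finset V)) : Finset (Finset V) :=
  Finset.univ.filter (fun e => e.card = r - 1 ∧ ∃ E ∈ H, e ⊆ E)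

/-- The codegree neighborhood of a set `e`: vertices `v` with `e ∪ {v} ∈ H`. -/
def nbhd (H : Finset (Finset V)) (e : Finset V) : Finset V :=
  Finset.univ.filter (fun v => insert v e ∈ H)

/-- The neighborhood of a vertex. -/
def vnbhd (H : Finset (Finset V)) (v : V) : Finset V :=
  Finset.univ.filter (fun u => u ≠ v ∧ ∃ E ∈ H, u ∈ E ∧ v ∈ E)

/-- `H` is T_r-free. -/
def IsTrFree (r : ℕ) (H : Finset (Finset V)) : Prop :=
  ¬ ∃ (S W : Finset V) (a b : V),
      S.card = r - 1 ∧ W.card = r - 2 ∧ a ≠ b ∧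
      a ∉ S ∧ b ∉ S ∧ a ∉ W ∧ b ∉ W ∧ Disjoint S W ∧
      insert a S ∈ H ∧ insert b S ∈ H ∧ insert a (insert b W) ∈ H

/-- A set of vertices is independent. -/
def IsIndep (H : Finset (Finset V)) (I : Finset V) : Prop :=
  ∀ E ∈ H, (E ∩ I).card ≤ 1

/-- `H` is r-partite. -/
def IsRPartite (r : ℕ) (H : Finset (Finset V)) : Prop :=
  ∃ P : Fin r → Finset V, (∀ v : V, ∃! i, v ∈ P i) ∧ ∀ i, IsIndep H (P i)

/-- Minimum positive codegree. -/
noncomputable def minPosCodeg (r : ℕ) (H : Finset (Finset V)) : ℕ :=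
  sInf {k | ∃ e ∈ sshadow r H, (nbhd H e).card = k}

/-!
Large codegrees allow any edge to be pushed off a given `(r - 1)`-set while keeping the rest of the
edge, so a `T_r`-free `H` has no edge meeting a codegree neighbourhood twice. Call `u` and `v`
swappable if both extend a common set to an edge. It suffices that swappability is transitive: then
every vertex of an edge is swappable with a vertex of one fixed edge `E`, as otherwise `r + 1`
disjoint codegree neighbourhoods would not fit into `V`, and this vertex of `E` is its colour.

Transitivity is proved by induction on `r`. If `S` witnesses that `u`, `v` are swappable, `T` that
`v`, `w` are, and `s ∈ S`, then the codegree neighbourhoods of the `r` subsets of size `r - 1` of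
`S ∪ {u}`, of those of `T ∪ {w}`, and of `(S ∪ {v}) \ {s}` have total size more than `2n`, so some
vertex `x` lies in three of them. The link of `x` satisfies the same density condition with `r - 1`
in place of `r`, since it avoids a whole codegree neighbourhood containing `x`, and in it `v` is
swappable both with `u` and with `w`.
-/

section

variable {r D : ℕ} {H : Finset (Finset V)} {S T E F : Finset V} {s u v w x : V}

/-- The vertices outside `S` whose addition to `S` gives an edge. This is `nbhd H S` except that
`nbhd H S = S` when `S` is itself an edge of a uniform `H`, which is excluded here. -/
def extensions (H : Finset (Finset V)) (S : Finset V) : Finset V :=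
  nbhd H S \ S

/-- The vertices that can take the place of some vertex of the edge `E`, including the vertices of
`E` themselves. -/
def replacements (H : Finset (Finset V)) (E : Finset V) : Finset V :=
  E.biUnion fun e ↦ extensions H (E.erase e)

/-- Exchanging `u` for `v` turns some edge of `H` into an edge; in the `r`-partite case this means
that `u` and `v` lie in the same part. -/
def Swappable (H : Finset (Finset V)) (u v : V) : Prop :=
  ∃ S, u ∈ extensions H S ∧ v ∈ extensions H S

/-- No edge contains the symmetric difference of two edges that differ by one vertex (the family
usually written `Σ_r`). -/
def IsSigmaFree (H : Finset (Finset V)) : Prop :=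
  ∀ S, IsIndep H (extensions H S)

/-- The minimum positive codegree is at least `D`, phrased without reference to uniformity. -/
def PosCodegreeAtLeast (D : ℕ) (H : Finset (Finset V)) : Prop :=
  ∀ ⦃S : Finset V⦄, (extensions H S).Nonempty → D ≤ (extensions H S).card

/-- The hypotheses of the theorem in the form that passes to links: the number of vertices is
replaced by the number of non-isolated ones, and the codegree bound `D` stays fixed. -/
structure IsDenseSigmaFree (r D : ℕ) (H : Finset (Finset V)) : Prop where
  sized : (H : Set (Finset V)).Sized r
  sigmaFree : IsSigmaFree H
  posCodegree : PosCodegreeAtLeast D H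
  card_support_lt : 2 * (H.biUnion id).card < (2 * r + 1) * D

theorem mem_extensions : v ∈ extensions H S ↔ v ∉ S ∧ insert v S ∈ H := by
  simp [extensions, nbhd, and_comm]

theorem mem_extensions_erase (hE : E ∈ H) (hv : v ∈ E) : v ∈ extensions H (E.erase v) := by
  simpa [mem_extensions, Finset.insert_erase hv] using hE

theorem extensions_subset_support : extensions H S ⊆ H.biUnion id := fun v hv ↦
  Finset.mem_biUnion.2 ⟨_, (mem_extensions.1 hv).2, Finset.mem_insert_self v S⟩

theorem replacements_subset_support : replacements H E ⊆ H.biUnion id :=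
  Finset.biUnion_subset.2 fun _ _ ↦ extensions_subset_support

theorem card_add_one_of_mem_extensions (hH : (H : Set (Finset V)).Sized r)
    (hv : v ∈ extensions H S) : S.card + 1 = r := by
  obtain ⟨hvS, hvH⟩ := mem_extensions.1 hv
  rw [← hH hvH, Finset.card_insert_of_notMem hvS]

theorem extensions_eq_nbhd (hH : (H : Set (Finset V)).Sized r) (hv : v ∈ extensions H S) :
    extensions H S = nbhd H S := by
  have hcard := card_add_one_of_mem_extensions hH hv
  refine Finset.sdiff_eq_self_of_disjoint (Finset.disjoint_left.2 fun z hz hzS ↦ ?_)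
  have hSH : S ∈ H := by simpa [nbhd, Finset.insert_eq_of_mem hzS] using hz
  have := hH hSH
  omega

theorem posCodegreeAtLeast_of_le_card_nbhd (hH : (H : Set (Finset V)).Sized r)
    (hdeg : ∀ e ∈ sshadow r H, D ≤ (nbhd H e).card) : PosCodegreeAtLeast D H := by
  rintro S ⟨v, hv⟩
  have hcard := card_add_one_of_mem_extensions hH hv
  have hS : S ∈ sshadow r H := by
    simp only [sshadow, Finset.mem_filter, Finset.mem_univ, true_and]
    exact ⟨by omega, _, (mem_extensions.1 hv).2, Finset.subset_insert v S⟩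
  exact (hdeg S hS).trans_eq (congrArg Finset.card (extensions_eq_nbhd hH hv).symm)

theorem PosCodegreeAtLeast.exists_disjoint_edge (hdeg : PosCodegreeAtLeast D H)
    (hS : S.card < D) (hE : E ∈ H) : ∃ F ∈ H, E \ S ⊆ F ∧ Disjoint F S := by
  obtain ⟨F, hF, hmin⟩ := Finset.exists_min_image (H.filter (E \ S ⊆ ·)) (fun F ↦ (F ∩ S).card)
    ⟨E, by simp [hE]⟩
  obtain ⟨hFH, hEF⟩ := Finset.mem_filter.1 hF
  refine ⟨F, hFH, hEF, Finset.disjoint_left.2 fun c hcF hcS ↦ ?_⟩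
  obtain ⟨y, hy, hyS⟩ := Finset.exists_mem_notMem_of_card_lt_card
    (hS.trans_le (hdeg ⟨c, mem_extensions_erase hFH hcF⟩))
  have hkeep : E \ S ⊆ insert y (F.erase c) := fun z hz ↦ Finset.mem_insert_of_mem <|
    Finset.mem_erase.2 ⟨fun h ↦ (Finset.mem_sdiff.1 hz).2 (h ▸ hcS), hEF hz⟩
  have hle := hmin _ (Finset.mem_filter.2 ⟨(mem_extensions.1 hy).2, hkeep⟩)
  rw [Finset.insert_inter_of_notMem hyS, Finset.erase_inter] at hle
  exact hle.not_gt (Finset.card_erase_lt_of_mem (Finset.mem_inter.2 ⟨hcF, hcS⟩))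

theorem IsTrFree.isSigmaFree (hfree : IsTrFree r H) (hH : (H : Set (Finset V)).Sized r)
    (hdeg : PosCodegreeAtLeast r H) : IsSigmaFree H := by
  refine fun S E hE ↦ Finset.card_le_one.2 fun a ha b hb ↦ by_contra fun hab ↦ ?_
  obtain ⟨haE, ha⟩ := Finset.mem_inter.1 ha
  obtain ⟨hbE, hb⟩ := Finset.mem_inter.1 hb
  have hcard := card_add_one_of_mem_extensions hH ha
  obtain ⟨haS, haH⟩ := mem_extensions.1 ha
  obtain ⟨hbS, hbH⟩ := mem_extensions.1 hb
  obtain ⟨F, hF, hEF, hFS⟩ := hdeg.exists_disjoint_edge (S := S) (by omega) hE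
  have haF : a ∈ F := hEF (Finset.mem_sdiff.2 ⟨haE, haS⟩)
  have hbF : b ∈ F.erase a :=
    Finset.mem_erase.2 ⟨Ne.symm hab, hEF (Finset.mem_sdiff.2 ⟨hbE, hbS⟩)⟩
  refine hfree ⟨S, (F.erase a).erase b, a, b, by omega, ?_, hab, haS, hbS, by simp, by simp, ?_,
    haH, hbH, ?_⟩
  · rw [Finset.card_erase_of_mem hbF, Finset.card_erase_of_mem haF, hH hF, Nat.sub_sub]
  · exact hFS.symm.mono_right ((Finset.erase_subset _ _).trans (Finset.erase_subset _ _))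
  · rwa [Finset.insert_erase hbF, Finset.insert_erase haF]

theorem Swappable.symm (h : Swappable H u v) : Swappable H v u :=
  let ⟨S, hu, hv⟩ := h
  ⟨S, hv, hu⟩

theorem IsSigmaFree.eq_of_swappable (hH : IsSigmaFree H) (h : Swappable H u v) (hE : E ∈ H)
    (hu : u ∈ E) (hv : v ∈ E) : u = v := by
  obtain ⟨S, huS, hvS⟩ := h
  exact Finset.card_le_one.1 (hH S E hE) u (Finset.mem_inter.2 ⟨hu, huS⟩) v
    (Finset.mem_inter.2 ⟨hv, hvS⟩)

theorem IsSigmaFree.not_swappable (hH : IsSigmaFree H) (hu : u ∈ extensions H S) (hv : v ∈ S) :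
    ¬ Swappable H u v := by
  intro h
  obtain ⟨huS, hS⟩ := mem_extensions.1 hu
  have huv := hH.eq_of_swappable h hS (Finset.mem_insert_self u S) (Finset.mem_insert_of_mem hv)
  exact huS (huv ▸ hv)

theorem IsSigmaFree.pairwiseDisjoint_extensions_erase (hH : IsSigmaFree H) (hE : E ∈ H) :
    (E : Set V).PairwiseDisjoint fun e ↦ extensions H (E.erase e) := by
  refine fun e _ f hf hef ↦ Finset.disjoint_left.2 fun x hxe hxf ↦ ?_
  exact hH.not_swappable hxe (Finset.mem_erase.2 ⟨hef.symm, hf⟩)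
    ⟨_, hxf, mem_extensions_erase hE hf⟩

theorem mem_extensions_memberSubfamily_comm :
    u ∈ extensions (H.memberSubfamily x) S ↔ u ∉ S ∧ x ∈ extensions H (insert u S) := by
  rw [mem_extensions, mem_extensions, Finset.mem_memberSubfamily, and_comm (a := insert x _ ∈ H)]

theorem mem_extensions_memberSubfamily :
    u ∈ extensions (H.memberSubfamily x) S ↔ x ∉ S ∧ u ∈ extensions H (insert x S) := by
  simp only [mem_extensions, Finset.mem_memberSubfamily, Finset.mem_insert, not_or,
    Finset.insert_comm x u S, eq_comm (a := x)]
  tauto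

theorem Swappable.of_memberSubfamily (h : Swappable (H.memberSubfamily x) u v) :
    Swappable H u v :=
  let ⟨S, hu, hv⟩ := h
  ⟨insert x S, (mem_extensions_memberSubfamily.1 hu).2, (mem_extensions_memberSubfamily.1 hv).2⟩

theorem IsSigmaFree.memberSubfamily (hH : IsSigmaFree H) (x : V) :
    IsSigmaFree (H.memberSubfamily x) := by
  refine fun S E hE ↦ Finset.card_le_one.2 fun u hu v hv ↦ ?_
  obtain ⟨huE, huS⟩ := Finset.mem_inter.1 hu
  obtain ⟨hvE, hvS⟩ := Finset.mem_inter.1 hv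
  exact hH.eq_of_swappable (Swappable.of_memberSubfamily ⟨S, huS, hvS⟩)
    (Finset.mem_memberSubfamily.1 hE).1 (Finset.mem_insert_of_mem huE)
    (Finset.mem_insert_of_mem hvE)

theorem PosCodegreeAtLeast.memberSubfamily (hdeg : PosCodegreeAtLeast D H) (x : V) :
    PosCodegreeAtLeast D (H.memberSubfamily x) := by
  rintro S ⟨u, hu⟩
  have hxS := (mem_extensions_memberSubfamily.1 hu).1
  have heq : extensions (H.memberSubfamily x) S = extensions H (insert x S) :=
    Finset.ext fun w ↦ mem_extensions_memberSubfamily.trans (and_iff_right hxS)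
  rw [heq] at hu ⊢
  exact hdeg ⟨u, hu⟩

theorem IsSigmaFree.support_memberSubfamily_subset (hH : IsSigmaFree H)
    (hx : x ∈ extensions H S) :
    (H.memberSubfamily x).biUnion id ⊆ H.biUnion id \ extensions H S := by
  refine Finset.biUnion_subset.2 fun E hE y hy ↦ ?_
  obtain ⟨hxE, hxnot⟩ := Finset.mem_memberSubfamily.1 hE
  exact Finset.mem_sdiff.2
    ⟨Finset.mem_biUnion.2 ⟨_, hxE, Finset.mem_insert_of_mem hy⟩,
      fun hyS ↦ hH.not_swappable (mem_extensions.2 ⟨hxnot, hxE⟩) hy ⟨S, hx, hyS⟩⟩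

namespace IsDenseSigmaFree

theorem memberSubfamily (hH : IsDenseSigmaFree (r + 1) D H) (hx : x ∈ extensions H S) :
    IsDenseSigmaFree r D (H.memberSubfamily x) where
  sized E hE := by
    obtain ⟨hxE, hxnot⟩ := Finset.mem_memberSubfamily.1 hE
    exact Nat.succ_injective ((Finset.card_insert_of_notMem hxnot).symm.trans (hH.sized hxE))
  sigmaFree := hH.sigmaFree.memberSubfamily x
  posCodegree := hH.posCodegree.memberSubfamily x
  card_support_lt := by
    have hle := Finset.card_le_card (hH.sigmaFree.support_memberSubfamily_subset hx)
    have hsplit := Finset.card_sdiff_add_card_eq_card (extensions_subset_support (H := H) (S := S))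
    have hdeg := hH.posCodegree ⟨x, hx⟩
    have hlt := hH.card_support_lt
    linarith

theorem mul_le_card_replacements (hH : IsDenseSigmaFree r D H) (hE : E ∈ H) :
    r * D ≤ (replacements H E).card := by
  rw [replacements, Finset.card_biUnion (hH.sigmaFree.pairwiseDisjoint_extensions_erase hE),
    ← hH.sized hE, ← smul_eq_mul]
  exact Finset.card_nsmul_le_sum _ _ _ fun e he ↦ hH.posCodegree ⟨e, mem_extensions_erase hE he⟩

theorem exists_mem_replacements_inter_extensions (hH : IsDenseSigmaFree r D H) (hE : E ∈ H)
    (hF : F ∈ H) (hS : (extensions H S).Nonempty) :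
    ∃ x ∈ extensions H S, x ∈ replacements H E ∧ x ∈ replacements H F := by
  have hcardE := hH.mul_le_card_replacements hE
  have hcardF := hH.mul_le_card_replacements hF
  have hcardS := hH.posCodegree hS
  have hlt := hH.card_support_lt
  have hsub := Finset.card_le_card (Finset.union_subset
    (replacements_subset_support (H := H) (E := E)) (replacements_subset_support (E := F)))
  have hunion := Finset.card_union_add_card_inter (replacements H E) (replacements H F)
  obtain ⟨x, hx⟩ := Finset.inter_nonempty_of_card_lt_card_add_card extensions_subset_support
    (Finset.inter_subset_left.trans replacements_subset_support)
    (show (H.biUnion id).card <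
      (extensions H S).card + (replacements H E ∩ replacements H F).card by linarith)
  simp only [Finset.mem_inter] at hx
  exact ⟨x, hx⟩

theorem exists_swappable_mem (hH : IsDenseSigmaFree r D H)
    (htrans : ∀ {u v w}, Swappable H u v → Swappable H v w → Swappable H u w)
    (hE : E ∈ H) (hF : F ∈ H) (hv : v ∈ F) : ∃ e ∈ E, Swappable H v e := by
  have hvF := mem_extensions_erase hF hv
  have hcardE := hH.mul_le_card_replacements hE
  have hcardF := hH.posCodegree ⟨v, hvF⟩
  have hlt := hH.card_support_lt
  obtain ⟨x, hx⟩ := Finset.inter_nonempty_of_card_lt_card_add_card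
    (replacements_subset_support (E := E)) (extensions_subset_support (S := F.erase v))
    (show (H.biUnion id).card < _ by linarith)
  obtain ⟨hxE, hxF⟩ := Finset.mem_inter.1 hx
  obtain ⟨e, he, hxe⟩ := Finset.mem_biUnion.1 hxE
  exact ⟨e, he, htrans ⟨_, hvF, hxF⟩ ⟨_, hxe, mem_extensions_erase hE he⟩⟩

end IsDenseSigmaFree

theorem exists_mem_extensions_insert_erase (hu : u ∈ extensions H S) (hv : v ∈ extensions H S)
    (hx : x ∈ replacements H (insert u S)) (hxv : ¬ Swappable H x v) :
    ∃ t ∈ S, x ∈ extensions H (insert u (S.erase t)) := by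
  have huS := (mem_extensions.1 hu).1
  obtain ⟨t, ht, hxt⟩ := Finset.mem_biUnion.1 hx
  have htu : t ≠ u := by
    rintro rfl
    rw [Finset.erase_insert huS] at hxt
    exact hxv ⟨S, hxt, hv⟩
  exact ⟨t, Finset.mem_of_mem_insert_of_ne ht htu, by
    rwa [Finset.erase_insert_of_ne htu.symm] at hxt⟩

theorem IsSigmaFree.mem_extensions_insert_erase (hH : IsSigmaFree H) (hu : u ∈ extensions H S)
    (hv : v ∈ extensions H S) (hxv : x ∈ extensions H (insert v (S.erase s)))
    (hx : x ∈ replacements H (insert u S)) : x ∈ extensions H (insert u (S.erase s)) := by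
  obtain ⟨huS, huH⟩ := mem_extensions.1 hu
  obtain ⟨t, htS, hxt⟩ := exists_mem_extensions_insert_erase hu hv hx
    (hH.not_swappable hxv (Finset.mem_insert_self v _))
  have htu : u ≠ t := fun h ↦ huS (h ▸ htS)
  have hxt_swap : Swappable H x t := by
    refine ⟨_, hxt, ?_⟩
    rw [← Finset.erase_insert_of_ne htu]
    exact mem_extensions_erase huH (Finset.mem_insert_of_mem htS)
  have hts : t = s := by
    by_contra hts
    exact hH.not_swappable hxv
      (Finset.mem_insert_of_mem (Finset.mem_erase.2 ⟨hts, htS⟩)) hxt_swap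
  exact hts ▸ hxt

namespace IsDenseSigmaFree

theorem swappable_of_swappable_links (hH : IsDenseSigmaFree (r + 1) D H)
    (htrans : ∀ {x : V}, IsDenseSigmaFree r D (H.memberSubfamily x) → ∀ {u v w},
      Swappable (H.memberSubfamily x) u v → Swappable (H.memberSubfamily x) v w →
        Swappable (H.memberSubfamily x) u w)
    (hu : u ∈ extensions H S) (hv : v ∈ extensions H S) (hs : s ∈ S)
    (hvT : v ∈ extensions H T) (hw : w ∈ extensions H T) : Swappable H u w := by
  have hfree := hH.sigmaFree
  obtain ⟨huS, huH⟩ := mem_extensions.1 hu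
  obtain ⟨hvS, hvH⟩ := mem_extensions.1 hv
  obtain ⟨hwT, hwH⟩ := mem_extensions.1 hw
  have hsv : s ∈ extensions H (insert v (S.erase s)) := by
    rw [← Finset.erase_insert_of_ne fun h : v = s ↦ hvS (h.symm ▸ hs)]
    exact mem_extensions_erase hvH (Finset.mem_insert_of_mem hs)
  obtain ⟨x, hxv, hxu, hxw⟩ := hH.exists_mem_replacements_inter_extensions huH hwH ⟨s, hsv⟩
  replace hxu := hfree.mem_extensions_insert_erase hu hv hxv hxu
  obtain ⟨t, -, hxw⟩ := exists_mem_extensions_insert_erase hw hvT hxw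
    (hfree.not_swappable hxv (Finset.mem_insert_self v _))
  have mem_link {z : V} {R : Finset V} {y : V} (hz : z ∉ R)
      (hx : x ∈ extensions H (insert z (R.erase y))) :
      z ∈ extensions (H.memberSubfamily x) (R.erase y) :=
    mem_extensions_memberSubfamily_comm.2 ⟨fun h ↦ hz (Finset.mem_of_mem_erase h), hx⟩
  have hv_link := mem_link hvS hxv
  have hlink := hH.memberSubfamily hxv
  obtain ⟨y, hy, hvy⟩ := hlink.exists_swappable_mem (htrans hlink)
    (mem_extensions.1 (mem_link hwT hxw)).2 (mem_extensions.1 hv_link).2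
    (Finset.mem_insert_self v _)
  have hyw : y = w := by
    by_contra hyw
    have hyT := Finset.mem_of_mem_erase (Finset.mem_of_mem_insert_of_ne hy hyw)
    exact hfree.not_swappable hvT hyT hvy.of_memberSubfamily
  have huv_link : Swappable (H.memberSubfamily x) u v := ⟨_, mem_link huS hxu, hv_link⟩
  exact (htrans hlink huv_link (hyw ▸ hvy)).of_memberSubfamily

theorem swappable_trans (hH : IsDenseSigmaFree r D H) (huv : Swappable H u v)
    (hvw : Swappable H v w) : Swappable H u w := by
  obtain ⟨S, hu, hv⟩ := huv
  obtain ⟨T, hvT, hw⟩ := hvw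
  have hcardS := card_add_one_of_mem_extensions hH.sized hu
  have hcardT := card_add_one_of_mem_extensions hH.sized hw
  induction r generalizing H S T u v w with
  | zero => omega
  | succ r ih =>
    rcases S.eq_empty_or_nonempty with rfl | ⟨s, hs⟩
    · have hT : T = ∅ := Finset.card_eq_zero.1 (by rw [Finset.card_empty] at hcardS; omega)
      exact ⟨∅, hu, hT ▸ hw⟩
    · refine hH.swappable_of_swappable_links (fun hlink ↦ ?_) hu hv hs hvT hw
      rintro u v w ⟨S', hu, hv⟩ ⟨T', hvT, hw⟩
      exact ih hlink S' hu hv T' hvT hw (card_add_one_of_mem_extensions hlink.sized hu)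
        (card_add_one_of_mem_extensions hlink.sized hw)

end IsDenseSigmaFree

theorem isRPartite_of_injOn {α : Type*} [Finite α] [DecidableEq α] {H : Finset (Finset α)}
    (c : α → Fin r) (hc : ∀ E ∈ H, Set.InjOn c E) : IsRPartite r H := by
  cases nonempty_fintype α
  refine ⟨fun i ↦ Finset.univ.filter (c · = i), fun v ↦ ⟨c v, by simp, by simp⟩, ?_⟩
  refine fun i E hE ↦ Finset.card_le_one.2 fun x hx y hy ↦ ?_
  simp only [Finset.mem_inter, Finset.mem_filter, Finset.mem_univ, true_and] at hx hy
  exact hc E hE hx.1 hy.1 (hx.2.trans hy.2.symm)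

theorem IsDenseSigmaFree.isRPartite (hH : IsDenseSigmaFree r D H) (hr : r ≠ 0) :
    IsRPartite r H := by
  rcases H.eq_empty_or_nonempty with rfl | ⟨E, hE⟩
  · exact isRPartite_of_injOn (fun _ ↦ ⟨0, Nat.pos_of_ne_zero hr⟩) (by simp)
  have : Nonempty E := (Finset.card_ne_zero.1 (hH.sized hE ▸ hr)).to_subtype
  have hpart : ∀ v, (∃ F ∈ H, v ∈ F) → ∃ e : E, Swappable H v e := fun v ⟨F, hF, hv⟩ ↦
    let ⟨e, he, hve⟩ := hH.exists_swappable_mem hH.swappable_trans hE hF hv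
    ⟨⟨e, he⟩, hve⟩
  choose! f hf using hpart
  refine isRPartite_of_injOn (E.equivFinOfCardEq (hH.sized hE) ∘ f) fun F hF x hx y hy hxy ↦ ?_
  have hfxy : f x = f y := (E.equivFinOfCardEq (hH.sized hE)).injective hxy
  have hyx : Swappable H (f x) y := hfxy ▸ (hf y ⟨F, hF, hy⟩).symm
  exact hH.sigmaFree.eq_of_swappable (hH.swappable_trans (hf x ⟨F, hF, hx⟩) hyx) hF hx hy

theorem stmt0_general (hr : 2 ≤ r) (hH : ∀ E ∈ H, E.card = r) (hfree : IsTrFree r H)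
    (hcodeg : ∀ e ∈ sshadow r H, r ≤ (nbhd H e).card)
    (hdeg : ∀ e ∈ sshadow r H,
      2 * (Fintype.card V : ℝ) / (2 * r + 1) < ((nbhd H e).card : ℝ)) :
    IsRPartite r H := by
  have hsized : (H : Set (Finset V)).Sized r := fun E hE ↦ hH E hE
  let q : ℝ := 2 * Fintype.card V / (2 * r + 1)
  have hq_deg : PosCodegreeAtLeast (⌊q⌋₊ + 1) H :=
    posCodegreeAtLeast_of_le_card_nbhd hsized fun e he ↦
      (Nat.floor_lt (by positivity)).2 (hdeg e he)
  have hcard : 2 * Fintype.card V < (2 * r + 1) * (⌊q⌋₊ + 1) := by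
    have hlt : q < ⌊q⌋₊ + 1 := Nat.lt_floor_add_one q
    exact_mod_cast (div_lt_iff₀' (by positivity)).1 hlt
  have hdense : IsDenseSigmaFree r (⌊q⌋₊ + 1) H :=
    { sized := hsized
      sigmaFree := hfree.isSigmaFree hsized (posCodegreeAtLeast_of_le_card_nbhd hsized hcodeg)
      posCodegree := hq_deg
      card_support_lt := (Nat.mul_le_mul_left 2 (Finset.card_le_univ _)).trans_lt hcard }
  exact hdense.isRPartite (by omega)

end

/-- **Positive codegree Andrásfai–Erdős–Sós theorem for the generalized triangle.**
For `r ≥ 3` and `n ≥ (r-1)(2r+1)/2`, every `n`-vertex `T_r`-free `r`-graph with minimum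
positive codegree greater than `2n/(2r+1)` is `r`-partite. -/
theorem stmt0 {V : Type*} [Fintype V] [DecidableEq V] {r n : ℕ} (hr : 3 ≤ r)
    (hn : ((r : ℝ) - 1) * (2 * r + 1) / 2 ≤ n) (hV : Fintype.card V = n)
    {H : Finset (Finset V)} (hH : ∀ E ∈ H, E.card = r)
    (hfree : IsTrFree r H)
    (hdeg : ∀ e ∈ sshadow r H, 2 * (n : ℝ) / (2 * r + 1) < ((nbhd H e).card : ℝ)) :
    IsRPartite r H := by
  subst hV
  have hlow : (r : ℝ) - 1 ≤ 2 * Fintype.card V / (2 * r + 1) :=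
    (le_div_iff₀ (by positivity)).2 (by linarith)
  refine stmt0_general (by omega) hH hfree (fun e he ↦ Nat.lt_add_one_iff.1 ?_) hdeg
  exact_mod_cast sub_lt_iff_lt_add.1 (hlow.trans_lt (hdeg e he))
end

section
/- Let r ≥ 3 be an integer. Every T_r-free r-graph H with δ⁺_{r-1}(H) ≥ r is also Σ_r-free; that is, there do not exist three edges A, B, C of H such that |A ∩ B| = r-1 and the symmetric difference A △ B is contained in C. -/
variable {V : Type*} [Fintype V] [DecidableEq V]

/-!
If an edge `C` contains `A ∆ B` but meets `S = A ∩ B`, then a vertex `v ∈ C ∩ S` can be traded for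
one outside `S`: the shadow set `C \ {v}` has at least `r > |S|` neighbors. So an
edge `C ⊇ A ∆ B` minimizing `|C ∩ S|` is disjoint from `S`, and then `A`, `B`, `C` form a
generalized triangle.
-/

section

variable {r : ℕ} {H : Finset (Finset V)}

lemma mem_nbhd {e : Finset V} {v : V} : v ∈ nbhd H e ↔ insert v e ∈ H := by
  simp only [nbhd, Finset.mem_filter, Finset.mem_univ, true_and]

lemma erase_mem_sshadow {E : Finset V} {v : V} (hE : E ∈ H) (hcard : E.card = r) (hv : v ∈ E) :
    E.erase v ∈ sshadow r H := by
  simp only [sshadow, Finset.mem_filter, Finset.mem_univ, true_and]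
  exact ⟨by rw [Finset.card_erase_of_mem hv, hcard], E, hE, E.erase_subset v⟩

lemma exists_notMem_insert_erase_mem {S E : Finset V} {v : V}
    (hdeg : ∀ e ∈ sshadow r H, S.card < (nbhd H e).card)
    (hE : E ∈ H) (hcard : E.card = r) (hv : v ∈ E) :
    ∃ w ∉ S, insert w (E.erase v) ∈ H := by
  obtain ⟨w, hw, hwS⟩ :=
    Finset.exists_mem_notMem_of_card_lt_card (hdeg _ (erase_mem_sshadow hE hcard hv))
  exact ⟨w, hwS, mem_nbhd.1 hw⟩

lemma exists_superset_mem_disjoint {K S C : Finset V} (hH : ∀ E ∈ H, E.card = r)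
    (hdeg : ∀ e ∈ sshadow r H, S.card < (nbhd H e).card)
    (hC : C ∈ H) (hKC : K ⊆ C) (hKS : Disjoint K S) :
    ∃ D ∈ H, K ⊆ D ∧ Disjoint D S := by
  obtain ⟨D, hD, hmin⟩ := (H.filter (K ⊆ ·)).exists_min_image (fun D => (D ∩ S).card)
    ⟨C, Finset.mem_filter.2 ⟨hC, hKC⟩⟩
  obtain ⟨hDH, hKD⟩ := Finset.mem_filter.1 hD
  refine ⟨D, hDH, hKD, ?_⟩
  by_contra hDS
  obtain ⟨v, hvD, hvS⟩ := Finset.not_disjoint_iff.1 hDS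
  obtain ⟨w, hwS, hwH⟩ := exists_notMem_insert_erase_mem hdeg hDH (hH D hDH) hvD
  have hK : K ⊆ insert w (D.erase v) :=
    (Finset.subset_erase.2 ⟨hKD, fun hvK => Finset.disjoint_left.1 hKS hvK hvS⟩).trans
      (Finset.subset_insert _ _)
  have hlt : (insert w (D.erase v) ∩ S).card < (D ∩ S).card := by
    rw [Finset.insert_inter_of_notMem hwS, Finset.erase_inter]
    exact Finset.card_erase_lt_of_mem (Finset.mem_inter.2 ⟨hvD, hvS⟩)
  exact (hmin _ (Finset.mem_filter.2 ⟨hwH, hK⟩)).not_gt hlt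

omit [Fintype V] in
lemma IsTrFree.not_disjoint {S D : Finset V} {a b : V} (hfree : IsTrFree r H)
    (hS : S.card = r - 1) (hD : D.card = r) (hab : a ≠ b)
    (haSH : insert a S ∈ H) (hbSH : insert b S ∈ H) (hDH : D ∈ H) (haD : a ∈ D) (hbD : b ∈ D) :
    ¬ Disjoint D S := by
  intro hDS
  have haS : a ∉ S := Finset.disjoint_left.1 hDS haD
  have hbS : b ∉ S := Finset.disjoint_left.1 hDS hbD
  have hb : b ∈ D.erase a := Finset.mem_erase.2 ⟨hab.symm, hbD⟩
  have hW : ((D.erase a).erase b).card = r - 2 := by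
    rw [Finset.card_erase_of_mem hb, Finset.card_erase_of_mem haD, hD, Nat.sub_sub]
  have hSW : Disjoint S ((D.erase a).erase b) :=
    (hDS.mono_left ((Finset.erase_subset _ _).trans (Finset.erase_subset _ _))).symm
  have hDeq : insert a (insert b ((D.erase a).erase b)) = D := by
    rw [Finset.insert_erase hb, Finset.insert_erase haD]
  exact hfree ⟨S, (D.erase a).erase b, a, b, hS, hW, hab, haS, hbS, by simp, by simp, hSW,
    haSH, hbSH, hDeq.symm ▸ hDH⟩

omit [Fintype V] in
lemma IsTrFree.not_disjoint_inter {A B D : Finset V} (hfree : IsTrFree r H) (hr : 1 ≤ r)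
    (hH : ∀ E ∈ H, E.card = r) (hA : A ∈ H) (hB : B ∈ H) (hD : D ∈ H)
    (hcard : (A ∩ B).card = r - 1) (hsub : symmDiff A B ⊆ D) :
    ¬ Disjoint D (A ∩ B) := by
  have hsucc : (A ∩ B).card + 1 = r := by rw [hcard, Nat.sub_add_cancel hr]
  obtain ⟨a, ha, haA⟩ :=
    Finset.exists_eq_insert_iff.2 ⟨Finset.inter_subset_left, hsucc.trans (hH A hA).symm⟩
  obtain ⟨b, hb, hbB⟩ :=
    Finset.exists_eq_insert_iff.2 ⟨Finset.inter_subset_right, hsucc.trans (hH B hB).symm⟩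
  have ha_mem : a ∈ A := haA ▸ Finset.mem_insert_self a _
  have hb_mem : b ∈ B := hbB ▸ Finset.mem_insert_self b _
  have haB : a ∉ B := fun h => ha (Finset.mem_inter.2 ⟨ha_mem, h⟩)
  have hbA : b ∉ A := fun h => hb (Finset.mem_inter.2 ⟨h, hb_mem⟩)
  exact hfree.not_disjoint hcard (hH D hD) (ne_of_mem_of_not_mem hb_mem haB).symm
    (haA.symm ▸ hA) (hbB.symm ▸ hB) hD
    (hsub (Finset.mem_symmDiff.2 (.inl ⟨ha_mem, haB⟩)))
    (hsub (Finset.mem_symmDiff.2 (.inr ⟨hb_mem, hbA⟩)))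

end

/-- Every `T_r`-free `r`-graph with minimum positive codegree at least `r` is `Σ_r`-free:
there are no three edges `A, B, C` with `|A ∩ B| = r - 1` and `A △ B ⊆ C`. -/
theorem stmt2 {V : Type*} [Fintype V] [DecidableEq V] {r : ℕ} (hr : 3 ≤ r)
    {H : Finset (Finset V)} (hH : ∀ E ∈ H, E.card = r)
    (hfree : IsTrFree r H)
    (hdeg : ∀ e ∈ sshadow r H, r ≤ (nbhd H e).card) :
    ¬ ∃ A ∈ H, ∃ B ∈ H, ∃ C ∈ H, (A ∩ B).card = r - 1 ∧ symmDiff A B ⊆ C := by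
  rintro ⟨A, hA, B, hB, C, hC, hcard, hsub⟩
  have hcodeg : ∀ e ∈ sshadow r H, (A ∩ B).card < (nbhd H e).card := fun e he =>
    lt_of_lt_of_le (by omega) (hdeg e he)
  obtain ⟨D, hD, hsubD, hdisj⟩ :=
    exists_superset_mem_disjoint hH hcodeg hC hsub (disjoint_symmDiff_inf A B)
  exact hfree.not_disjoint_inter (by omega) hH hA hB hD hcard hsubD hdisj
end

section
/- Let ℓ ≥ r ≥ 3 be integers and let H be an r-graph such that the (r-2)-th shadow ∂_{r-2}H (a 2-graph) contains no clique on ℓ+1 vertices, and δ⁺_{r-1}(H) > (r-2)·binom(ℓ,2). Then H is H_{ℓ+1}^r-free, i.e. H contains no copy of the expansion of the complete graph K_{ℓ+1}. -/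
variable {V : Type*} [Fintype V] [DecidableEq V]

/-- `H` contains no copy of the expansion `H_{ℓ+1}^r` of the complete graph `K_{ℓ+1}`. -/
def ExpansionFree (r ℓ : ℕ) (H : Finset (Finset V)) : Prop :=
  ¬ ∃ (f : Fin (ℓ + 1) → V) (g : Fin (ℓ + 1) → Fin (ℓ + 1) → Finset V),
      Function.Injective f ∧
      (∀ i j, i < j → (g i j).card = r - 2) ∧
      (∀ i j, i < j → ∀ k, f k ∉ g i j) ∧
      (∀ i j, i < j → ∀ i' j', i' < j' → (i, j) ≠ (i', j') → Disjoint (g i j) (g i' j')) ∧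
      (∀ i j, i < j → insert (f i) (insert (f j) (g i j)) ∈ H)

section PairCovering

open Finset
open scoped FinsetFamily

variable {α : Type*} [DecidableEq α] {H : Finset (Finset α)} {r : ℕ}

/-- Any two distinct vertices of `S` lie in a common edge of `H`. The core of an expansion of a
complete graph has this property; in an `r`-graph, it makes `S` a clique in the `(r-2)`-th
shadow. -/
def CoversPairs (H : Finset (Finset α)) (S : Finset α) : Prop :=
  (S : Set α).Pairwise fun a b => ∃ E ∈ H, a ∈ E ∧ b ∈ E

theorem mem_shadow_iterate_of_subset (hH : (H : Set (Finset α)).Sized r) {E s : Finset α}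
    (hE : E ∈ H) (hs : s ⊆ E) : s ∈ ∂^[r - #s] H := by
  have hcard : #s ≤ r := hH hE ▸ card_le_card hs
  exact mem_shadow_iterate_iff_exists_mem_card_add.2
    ⟨E, hE, hs, (hH hE).trans (Nat.add_sub_of_le hcard).symm⟩

theorem CoversPairs.pair_mem_shadow_iterate (hH : (H : Set (Finset α)).Sized r) {S : Finset α}
    (hS : CoversPairs H S) {a b : α} (ha : a ∈ S) (hb : b ∈ S) (hab : a ≠ b) :
    {a, b} ∈ ∂^[r - 2] H := by
  obtain ⟨E, hE, haE, hbE⟩ := hS ha hb hab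
  have hpair : ({a, b} : Finset α) ⊆ E := insert_subset haE (singleton_subset_iff.2 hbE)
  simpa only [card_pair hab] using mem_shadow_iterate_of_subset hH hE hpair

theorem coversPairs_image_univ {ι : Type*} [Fintype ι] [LinearOrder ι] {f : ι → α}
    (hf : ∀ i j, i < j → ∃ E ∈ H, f i ∈ E ∧ f j ∈ E) : CoversPairs H (univ.image f) := by
  rw [CoversPairs, coe_image, coe_univ, Set.image_univ]
  rintro _ ⟨i, rfl⟩ _ ⟨j, rfl⟩ hij
  rcases lt_or_gt_of_ne (ne_of_apply_ne f hij) with hlt | hgt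
  · exact hf i j hlt
  · obtain ⟨E, hE, hj, hi⟩ := hf j i hgt
    exact ⟨E, hE, hi, hj⟩

theorem expansionFree_of_forall_not_coversPairs {ℓ : ℕ}
    (hcover : ∀ S : Finset α, #S = ℓ + 1 → ¬ CoversPairs H S) : ExpansionFree r ℓ H := by
  rintro ⟨f, g, hf, -, -, -, hedge⟩
  have hcard : #(univ.image f) = ℓ + 1 := by
    rw [card_image_of_injective _ hf, card_fin]
  have hpairs : ∀ i j, i < j → ∃ E ∈ H, f i ∈ E ∧ f j ∈ E := fun i j hij =>
    ⟨_, hedge i j hij, mem_insert_self _ _, mem_insert_of_mem (mem_insert_self _ _)⟩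
  exact hcover _ hcard (coversPairs_image_univ hpairs)

theorem stmt10_general {ℓ : ℕ} (hH : ∀ E ∈ H, #E = r)
    (hK : ¬ ∃ S : Finset α, #S = ℓ + 1 ∧
      ∀ a ∈ S, ∀ b ∈ S, a ≠ b → ({a, b} : Finset α) ∈ ∂^[r - 2] H) :
    ExpansionFree r ℓ H :=
  expansionFree_of_forall_not_coversPairs fun S hcard hS =>
    hK ⟨S, hcard, fun _ ha _ hb hab => hS.pair_mem_shadow_iterate (fun _ => hH _) ha hb hab⟩

end PairCovering

/-- Let `ℓ ≥ r ≥ 3`. If `H` is an `r`-graph whose `(r-2)`-th shadow contains no clique on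
`ℓ + 1` vertices and whose minimum positive codegree exceeds `(r-2)·C(ℓ,2)`, then `H`
contains no copy of the expansion `H_{ℓ+1}^r` of `K_{ℓ+1}`. -/
theorem stmt10 {V : Type*} [Fintype V] [DecidableEq V] {r ℓ : ℕ} (hr : 3 ≤ r) (hℓ : r ≤ ℓ)
    {H : Finset (Finset V)} (hH : ∀ E ∈ H, E.card = r)
    (hK : ¬ ∃ S : Finset V, S.card = ℓ + 1 ∧
      ∀ a ∈ S, ∀ b ∈ S, a ≠ b → ({a, b} : Finset V) ∈ Finset.shadow^[r - 2] H)
    (hdeg : ∀ e ∈ sshadow r H, (r - 2) * ℓ.choose 2 < (nbhd H e).card) :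
    ExpansionFree r ℓ H :=
  stmt10_general hH hK
end

section
/- Let r ≥ 3 and let n be an integer with 2r-2 ≤ n < (r-1)(2r+1)/2. Then there exists an n-vertex T_r-free r-graph H with δ⁺_{r-1}(H) > 2n/(2r+1) that is not r-partite; namely, the r-graph consisting of all r-subsets of a fixed (2r-2)-set together with n-(2r-2) isolated vertices is T_r-free, has δ⁺_{r-1}(H) = r-1 > 2n/(2r+1), and is not r-partite. -/
variable {V : Type*} [Fintype V] [DecidableEq V]

/-!
The edges of `H` are the `r`-subsets of a set `A` with `2r - 2` vertices. A copy of `T_r` spans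
`2r - 1` vertices, one more than `A` has. An `(r-1)`-set in the shadow extends to an edge exactly
by the `r - 1` vertices of `A` outside it. Any two vertices of `A` share an edge, so an
`r`-partition would put the `2r - 2 > r` vertices of `A` into different parts.
-/

section

open Finset

variable {r k : ℕ}

section

variable {α : Type*} [DecidableEq α] {H : Finset (Finset α)} {A : Finset α}

theorem isTrFree_of_forall_subset (hH : ∀ E ∈ H, E ⊆ A) (hA : #A < 2 * r - 1) :
    IsTrFree r H := by
  rintro ⟨S, W, a, b, hS, hW, hab, haS, hbS, haW, hbW, hSW, haS_mem, hbS_mem, habW_mem⟩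
  have h_span : insert a (insert b (S ∪ W)) ⊆ A := by
    have haS_sub := hH _ haS_mem
    have hbS_sub := hH _ hbS_mem
    have habW_sub := hH _ habW_mem
    simp only [insert_subset_iff, union_subset_iff] at haS_sub hbS_sub habW_sub ⊢
    exact ⟨haS_sub.1, hbS_sub.1, haS_sub.2, habW_sub.2.2⟩
  have h_card : #(insert a (insert b (S ∪ W))) = (r - 1) + (r - 2) + 1 + 1 := by
    rw [card_insert_of_notMem (by simp [hab, haS, haW]),
      card_insert_of_notMem (by simp [hbS, hbW]), card_union_of_disjoint hSW, hS, hW]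
  have h_le := card_le_card h_span
  omega

theorem IsRPartite.card_le_of_pairwise (hH : IsRPartite r H)
    (hA : (A : Set α).Pairwise fun u v ↦ ∃ E ∈ H, u ∈ E ∧ v ∈ E) : #A ≤ r := by
  obtain ⟨P, hP, hP_indep⟩ := hH
  choose part mem_part _ using hP
  have h_inj : Set.InjOn part A := by
    intro u hu v hv h_part
    by_contra huv
    obtain ⟨E, hE, huE, hvE⟩ := hA hu hv huv
    have hv_part : v ∈ P (part u) := h_part ▸ mem_part v
    exact huv (card_le_one.1 (hP_indep (part u) E hE) u (mem_inter.2 ⟨huE, mem_part u⟩)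
      v (mem_inter.2 ⟨hvE, hv_part⟩))
  simpa using card_le_card_of_injOn part (fun _ _ ↦ mem_univ _) h_inj

theorem not_isRPartite_powersetCard (hk : 2 ≤ k) (hkA : k ≤ #A) (hrA : r < #A) :
    ¬ IsRPartite r (A.powersetCard k) := by
  refine fun h ↦ hrA.not_ge (h.card_le_of_pairwise fun u hu v hv huv ↦ ?_)
  have huvA : {u, v} ⊆ A := insert_subset hu (singleton_subset_iff.2 hv)
  obtain ⟨E, huvE, hEA, hE⟩ :=
    exists_subsuperset_card_eq huvA ((card_pair huv).trans_le hk) hkA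
  rw [insert_subset_iff, singleton_subset_iff] at huvE
  exact ⟨E, mem_powersetCard.2 ⟨hEA, hE⟩, huvE⟩

end

variable {H : Finset (Finset V)} {A e : Finset V}

theorem sshadow_powersetCard (hr : r ≤ #A) :
    sshadow r (A.powersetCard r) = A.powersetCard (r - 1) := by
  ext e
  simp only [sshadow, mem_filter_univ, mem_powersetCard]
  constructor
  · rintro ⟨he, E, ⟨hEA, -⟩, heE⟩
    exact ⟨heE.trans hEA, he⟩
  · rintro ⟨heA, he⟩
    obtain ⟨E, heE, hEA, hE⟩ := exists_subsuperset_card_eq heA (by omega : #e ≤ r) hr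
    exact ⟨he, E, ⟨hEA, hE⟩, heE⟩

theorem nbhd_powersetCard (he : e ∈ A.powersetCard k) :
    nbhd (A.powersetCard (k + 1)) e = A \ e := by
  obtain ⟨heA, rfl⟩ := mem_powersetCard.1 he
  ext v
  by_cases hv : v ∈ e <;> simp [nbhd, mem_powersetCard, insert_subset_iff, hv, heA]

theorem minPosCodeg_eq_of_forall (hH : (sshadow r H).Nonempty)
    (hk : ∀ e ∈ sshadow r H, #(nbhd H e) = k) : minPosCodeg r H = k := by
  have h_image : {d | ∃ e ∈ sshadow r H, #(nbhd H e) = d} = {k} :=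
    (Set.image_congr hk).trans (hH.to_set.image_const k)
  rw [minPosCodeg, h_image, csInf_singleton]

theorem minPosCodeg_powersetCard (hr : r ≠ 0) (hrA : r ≤ #A) :
    minPosCodeg r (A.powersetCard r) = #A - (r - 1) := by
  obtain ⟨k, rfl⟩ := Nat.exists_eq_succ_of_ne_zero hr
  have h_shadow : sshadow (k + 1) (A.powersetCard (k + 1)) = A.powersetCard k :=
    sshadow_powersetCard hrA
  refine minPosCodeg_eq_of_forall ?_ fun e he ↦ ?_
  · rw [h_shadow, powersetCard_nonempty]
    omega
  · rw [h_shadow] at he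
    obtain ⟨heA, he_card⟩ := mem_powersetCard.1 he
    rw [nbhd_powersetCard he, card_sdiff_of_subset heA, he_card, Nat.succ_sub_one]

theorem stmt14_general (hr : 3 ≤ r) (hA : #A = 2 * r - 2)
    (hV : (Fintype.card V : ℝ) < ((r : ℝ) - 1) * (2 * r + 1) / 2) :
    (∀ E ∈ A.powersetCard r, #E = r) ∧
      IsTrFree r (A.powersetCard r) ∧
      minPosCodeg r (A.powersetCard r) = r - 1 ∧
      2 * (Fintype.card V : ℝ) / (2 * r + 1) < (r : ℝ) - 1 ∧
      ¬ IsRPartite r (A.powersetCard r) := by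
  refine ⟨fun E hE ↦ (mem_powersetCard.1 hE).2,
    isTrFree_of_forall_subset (fun E hE ↦ (mem_powersetCard.1 hE).1) (by omega), ?_, ?_,
    not_isRPartite_powersetCard (by omega) (by omega) (by omega)⟩
  · rw [minPosCodeg_powersetCard (by omega) (by omega)]
    omega
  · rw [div_lt_iff₀ (by positivity)]
    linarith

end

/-- For `r ≥ 3` and `2r - 2 ≤ n < (r-1)(2r+1)/2`, there is an `n`-vertex `T_r`-free
`r`-graph with minimum positive codegree `r - 1 > 2n/(2r+1)` that is not `r`-partite:
namely, all `r`-subsets of a fixed `(2r-2)`-set, together with `n - (2r-2)` isolated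
vertices. -/
theorem stmt14 {r n : ℕ} (hr : 3 ≤ r) (hn1 : 2 * r - 2 ≤ n)
    (hn2 : (n : ℝ) < ((r : ℝ) - 1) * (2 * r + 1) / 2) :
    ∃ H : Finset (Finset (Fin n)),
      H = (Finset.univ.filter (fun v : Fin n => (v : ℕ) < 2 * r - 2)).powersetCard r ∧
      (∀ E ∈ H, E.card = r) ∧
      IsTrFree r H ∧
      minPosCodeg r H = r - 1 ∧
      2 * (n : ℝ) / (2 * r + 1) < ((r : ℝ) - 1) ∧
      ¬ IsRPartite r H := by
  have h := stmt14_general hr (Fin.card_filter_val_lt.trans (min_eq_right hn1))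
    (by rwa [Fintype.card_fin])
  rw [Fintype.card_fin] at h
  exact ⟨_, rfl, h⟩
end

section
/- Let n ≥ 7 be an integer and let H be an n-vertex 3-graph whose shadow ∂H contains no clique on 4 vertices and which satisfies δ₂⁺(H) > 2n/7. Then H is 3-partite. -/
variable {V : Type*} [Fintype V] [DecidableEq V]

/-!
Let `G` be the shadow graph, on `n` vertices. It is `K₄`-free and every edge lies in more than
`2n/7` triangles. If `vxy` is a triangle, then `N(v)` misses `N(x) ∩ N(y)`, so `deg v < 5n/7` and
by Andrásfai-Erdős-Sós the link graph of `v` is bipartite. Both sides of that bipartition have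
more than `2n/7` vertices, hence fewer than `3n/7`, and `deg v > 4n/7`. Two consequences are used
throughout: two vertices on the same side of the link of `v` have a common neighbour in that link,
and among any seven non-isolated vertices some five have a common neighbour `z`, so that these
five span a bipartite graph.

Call `x` and `y` diamond tips if some edge forms a triangle with both. The second consequence,
applied to two graphs on seven vertices in which any five vertices contain an odd cycle, shows
that diamond tips adjacent to a vertex `u` lie on the same side of the link of `u`, and then that
being diamond tips is a transitive relation. It is thus an equivalence relation on the
non-isolated vertices whose classes are independent, and the three vertices of any triangle
represent all classes.
-/

open Finset

section

variable {α : Type*} {G : SimpleGraph α} {a b d e f u v x y z p q r p' s t : α}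

theorem card_add_card_le_card_add_card_inter [DecidableEq α] {A B C : Finset α} (hA : A ⊆ C)
    (hB : B ⊆ C) : #A + #B ≤ #C + #(A ∩ B) := by
  rw [← card_union_add_card_inter]
  gcongr
  exact union_subset hA hB

theorem exists_lt_card_filter_adj_of_lt_sum_degree [Fintype α] [DecidableRel G.Adj] {ι : Type*}
    [Fintype ι] {w : ι → α} {m : ℕ} (h : m * Fintype.card α < ∑ i, G.degree (w i)) :
    ∃ z, m < #{i | G.Adj (w i) z} := by
  by_contra! hle
  refine h.not_ge ?_
  calc ∑ i, G.degree (w i) = ∑ i, #(univ.bipartiteAbove (fun i z ↦ G.Adj (w i) z) i) := by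
        simp only [← G.card_neighborFinset_eq_degree, G.neighborFinset_eq_filter, bipartiteAbove]
    _ = ∑ z, #{i | G.Adj (w i) z} := sum_card_bipartiteAbove_eq_sum_card_bipartiteBelow _
    _ ≤ m * Fintype.card α := by
        simpa [mul_comm] using sum_le_card_nsmul univ _ m fun z _ ↦ hle z

/-- A choice of a proper `2`-colouring of the link graph of every vertex `v`, that is, of the
subgraph induced on its neighbourhood. The colour `side v x` is meaningless when `x` is not a
neighbour of `v`. -/
structure LinkColoring (G : SimpleGraph α) where
  /-- The side of the bipartition of the link of `v` that contains `x`. -/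
  side : α → α → Bool
  side_ne : ∀ ⦃v x y⦄, G.Adj v x → G.Adj v y → G.Adj x y → side v x ≠ side v y

/-- `x` and `y` are the tips of a diamond (`K₄` minus an edge): some edge `pq` forms a triangle with
each of them. The degenerate case `x = y` is allowed. -/
def DiamondTips (G : SimpleGraph α) (x y : α) : Prop :=
  ∃ p q, G.Adj p q ∧ G.Adj p x ∧ G.Adj q x ∧ G.Adj p y ∧ G.Adj q y

theorem DiamondTips.left_mem_support (h : DiamondTips G x y) : x ∈ G.support := by
  obtain ⟨p, q, -, hpx, -⟩ := h
  exact hpx.mem_support_right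

theorem DiamondTips.symm : DiamondTips G x y → DiamondTips G y x := by
  rintro ⟨p, q, hpq, hpx, hqx, hpy, hqy⟩
  exact ⟨p, q, hpq, hpy, hqy, hpx, hqx⟩

namespace LinkColoring

theorem nonempty_of_colorable_induce (h : ∀ v, (G.induce (G.neighborSet v)).Colorable 2) :
    Nonempty (LinkColoring G) := by
  classical
  let C v : (G.induce (G.neighborSet v)).Coloring Bool := (h v).toColoring (by simp)
  refine ⟨fun v x ↦ if hx : G.Adj v x then C v ⟨x, hx⟩ else false, fun v x y hx hy hxy ↦ ?_⟩
  simp only [hx, hy, dif_pos]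
  exact (C v).valid hxy

variable (σ : LinkColoring G)

theorem side_eq_not (hvx : G.Adj v x) (hvy : G.Adj v y) (hxy : G.Adj x y) :
    σ.side v y = !σ.side v x :=
  Bool.eq_not.2 (σ.side_ne hvx hvy hxy).symm

theorem side_eq_of_adj_of_adj (hvx : G.Adj v x) (hvy : G.Adj v y) (hvz : G.Adj v z)
    (hxy : G.Adj x y) (hyz : G.Adj y z) : σ.side v x = σ.side v z := by
  rw [σ.side_eq_not hvy hvz hyz, σ.side_eq_not hvx hvy hxy, Bool.not_not]

section

variable [Fintype α] [DecidableRel G.Adj]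

theorem card_side_add_card_side_not (v : α) (b : Bool) :
    #{y ∈ G.neighborFinset v | σ.side v y = b} + #{y ∈ G.neighborFinset v | σ.side v y = !b} =
      G.degree v := by
  simp only [Bool.eq_not]
  exact card_filter_add_card_filter_not _

theorem neighborFinset_inter_subset [DecidableEq α] (hvx : G.Adj v x) :
    G.neighborFinset v ∩ G.neighborFinset x ⊆
      {y ∈ G.neighborFinset v | σ.side v y = !σ.side v x} := by
  intro y hy
  simp only [mem_inter, mem_filter, G.mem_neighborFinset] at hy ⊢
  exact ⟨hy.1, σ.side_eq_not hvx hy.1 hy.2⟩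

end

include σ

theorem not_triangle (ha : G.Adj z a) (hb : G.Adj z b) (hd : G.Adj z d) (hab : G.Adj a b)
    (hbd : G.Adj b d) : ¬ G.Adj d a := fun hda ↦
  σ.side_ne ha hd hda.symm (σ.side_eq_of_adj_of_adj ha hb hd hab hbd)

theorem not_pentagon (ha : G.Adj z a) (hb : G.Adj z b) (hd : G.Adj z d) (he : G.Adj z e)
    (hf : G.Adj z f) (hab : G.Adj a b) (hbd : G.Adj b d) (hde : G.Adj d e) (hef : G.Adj e f) :
    ¬ G.Adj f a := fun hfa ↦
  σ.side_ne ha hf hfa.symm <| (σ.side_eq_of_adj_of_adj ha hb hd hab hbd).trans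
    (σ.side_eq_of_adj_of_adj hd he hf hde hef)

theorem not_adj_of_diamondTips (h : DiamondTips G x y) : ¬ G.Adj x y := by
  obtain ⟨p, q, hpq, hpx, hqx, hpy, hqy⟩ := h
  exact fun hxy ↦ σ.not_triangle hpq hpx hpy hqx hxy hqy.symm

end LinkColoring

/-- A `K₄`-free graph in which every edge lies in more than `2n/7` triangles, where `n` is the
number of vertices. -/
structure IsDenseK4Free [Fintype α] [DecidableEq α] (G : SimpleGraph α) [DecidableRel G.Adj] :
    Prop where
  cliqueFree : G.CliqueFree 4
  card_lt : ∀ ⦃a b⦄, G.Adj a b →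
    2 * Fintype.card α < 7 * #(G.neighborFinset a ∩ G.neighborFinset b)

namespace IsDenseK4Free

variable [Fintype α] [DecidableEq α] [DecidableRel G.Adj] (hG : IsDenseK4Free G)
include hG

theorem exists_adj_adj (hvx : G.Adj v x) : ∃ y, G.Adj v y ∧ G.Adj x y := by
  have := hG.card_lt hvx
  obtain ⟨y, hy⟩ := card_pos.1
    (show 0 < #(G.neighborFinset v ∩ G.neighborFinset x) by omega)
  simp only [mem_inter, G.mem_neighborFinset] at hy
  exact ⟨y, hy⟩

theorem degree_lt (hv : v ∈ G.support) : 7 * G.degree v < 5 * Fintype.card α := by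
  obtain ⟨x, hvx⟩ := G.mem_support.1 hv
  obtain ⟨y, hvy, hxy⟩ := hG.exists_adj_adj hvx
  have hdisj : Disjoint (G.neighborFinset v) (G.neighborFinset x ∩ G.neighborFinset y) := by
    rw [disjoint_left]
    intro z hvz hz
    simp only [mem_inter, G.mem_neighborFinset] at hvz hz
    have htri : G.IsNClique 3 {x, y, z} := SimpleGraph.is3Clique_triple_iff.2 ⟨hxy, hz.1, hz.2⟩
    exact hG.cliqueFree _ (htri.insert (a := v) (by simp [hvx, hvy, hvz]))
  have hle := card_le_univ (G.neighborFinset v ∪ G.neighborFinset x ∩ G.neighborFinset y)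
  rw [card_union_of_disjoint hdisj, G.card_neighborFinset_eq_degree] at hle
  have := hG.card_lt hxy
  omega

theorem card_lt_degree_induce (w : G.neighborSet v) :
    2 * Fintype.card α < 7 * (G.induce (G.neighborSet v)).degree w := by
  rw [← SimpleGraph.card_neighborFinset_eq_degree, ← card_map,
    SimpleGraph.map_neighborFinset_induce, inter_comm]
  exact hG.card_lt w.2

theorem colorable_induce_neighborSet (v : α) : (G.induce (G.neighborSet v)).Colorable 2 := by
  have hfree : (G.induce (G.neighborSet v)).CliqueFree 3 := by
    rw [SimpleGraph.cliqueFree_induce_iff]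
    simpa using SimpleGraph.CliqueFreeOn.of_succ G hG.cliqueFree.cliqueFreeOn (Set.mem_univ v)
  cases isEmpty_or_nonempty (G.neighborSet v) with
  | inl _ => exact SimpleGraph.Colorable.of_isEmpty 2
  | inr hne =>
    obtain ⟨x, hvx⟩ := hne
    have : Nonempty (G.neighborSet v) := ⟨x, hvx⟩
    refine SimpleGraph.colorable_of_cliqueFree_lt_minDegree hfree ?_
    obtain ⟨w, hw⟩ := (G.induce (G.neighborSet v)).exists_minimal_degree_vertex
    have := hG.card_lt_degree_induce w
    have := hG.degree_lt hvx.mem_support_left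
    rw [hw, G.card_neighborSet_eq_degree]
    omega

theorem nonempty_linkColoring : Nonempty (LinkColoring G) :=
  LinkColoring.nonempty_of_colorable_induce hG.colorable_induce_neighborSet

variable (σ : LinkColoring G)

theorem lt_card_side (hv : v ∈ G.support) (b : Bool) :
    2 * Fintype.card α < 7 * #{y ∈ G.neighborFinset v | σ.side v y = b} := by
  obtain ⟨x, hvx⟩ := G.mem_support.1 hv
  obtain ⟨y, hvy, hxy⟩ := hG.exists_adj_adj hvx
  obtain ⟨w, hvw, hw⟩ : ∃ w, G.Adj v w ∧ b = !σ.side v w := by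
    by_cases hb : b = !σ.side v x
    · exact ⟨x, hvx, hb⟩
    · exact ⟨y, hvy, (Bool.eq_not.2 hb).trans (congrArg _ (σ.side_eq_not hvx hvy hxy)).symm⟩
  have := card_le_card (σ.neighborFinset_inter_subset hvw)
  have := hG.card_lt hvw
  rw [hw]
  omega

theorem lt_degree (hv : v ∈ G.support) : 4 * Fintype.card α < 7 * G.degree v := by
  obtain ⟨σ⟩ := hG.nonempty_linkColoring
  have := hG.lt_card_side σ hv true
  have := hG.lt_card_side σ hv (!true)
  have := σ.card_side_add_card_side_not v true
  omega

theorem card_side_lt (hv : v ∈ G.support) (b : Bool) :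
    7 * #{y ∈ G.neighborFinset v | σ.side v y = b} < 3 * Fintype.card α := by
  have := hG.lt_card_side σ hv (!b)
  have := σ.card_side_add_card_side_not v b
  have := hG.degree_lt hv
  omega

theorem exists_common_adj (hx : x ∈ G.support) (hy : y ∈ G.support) :
    ∃ u, G.Adj u x ∧ G.Adj u y := by
  have := hG.lt_degree hx
  have := hG.lt_degree hy
  obtain ⟨u, hu⟩ := inter_nonempty_of_card_lt_card_add_card
    (subset_univ (G.neighborFinset x)) (subset_univ (G.neighborFinset y))
    (by simp only [card_univ, G.card_neighborFinset_eq_degree]; omega)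
  simp only [mem_inter, G.mem_neighborFinset] at hu
  exact ⟨u, hu.1.symm, hu.2.symm⟩

theorem exists_five_adj (w : Fin 7 → α) (hw : ∀ i, w i ∈ G.support) :
    ∃ z, ∃ S : Finset (Fin 7), 5 ≤ #S ∧ ∀ i ∈ S, G.Adj z (w i) := by
  obtain ⟨z, hz⟩ := exists_lt_card_filter_adj_of_lt_sum_degree (G := G) (w := w) (m := 4) <| by
    have hsum := sum_lt_sum_of_nonempty univ_nonempty fun i _ ↦ hG.lt_degree (hw i)
    simp only [sum_const, card_univ, Fintype.card_fin, smul_eq_mul, ← mul_sum] at hsum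
    omega
  exact ⟨z, _, hz, fun i hi ↦ (mem_filter.1 hi).2.symm⟩

theorem lt_card_inter_of_side_eq (hvx : G.Adj v x) (hvy : G.Adj v y)
    (h : σ.side v x = σ.side v y) :
    Fintype.card α < 7 * #((G.neighborFinset v ∩ G.neighborFinset x) ∩
      (G.neighborFinset v ∩ G.neighborFinset y)) := by
  have hsub := σ.neighborFinset_inter_subset hvy
  rw [← h] at hsub
  have := card_add_card_le_card_add_card_inter (σ.neighborFinset_inter_subset hvx) hsub
  have := hG.card_lt hvx
  have := hG.card_lt hvy
  have := hG.card_side_lt σ hvx.mem_support_left (!σ.side v x)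
  omega

theorem exists_adj_of_side_eq (hvx : G.Adj v x) (hvy : G.Adj v y)
    (h : σ.side v x = σ.side v y) : ∃ w, G.Adj v w ∧ G.Adj x w ∧ G.Adj y w := by
  have := hG.lt_card_inter_of_side_eq σ hvx hvy h
  obtain ⟨w, hw⟩ := card_pos.1 (pos_of_mul_pos_right ((Nat.zero_le _).trans_lt this) (by simp))
  simp only [mem_inter, G.mem_neighborFinset] at hw
  exact ⟨w, hw.1.1, hw.1.2, hw.2.2⟩

theorem diamondTips_of_side_eq (hux : G.Adj u x) (huy : G.Adj u y)
    (h : σ.side u x = σ.side u y) : DiamondTips G x y := by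
  obtain ⟨w, huw, hxw, hyw⟩ := hG.exists_adj_of_side_eq σ hux huy h
  exact ⟨u, w, huw, hux, hxw.symm, huy, hyw.symm⟩

theorem diamondTips_or_of_adj (hx : G.Adj u x) (hy : G.Adj u y) (hz : G.Adj u z) :
    DiamondTips G x y ∨ DiamondTips G y z ∨ DiamondTips G x z := by
  obtain ⟨σ⟩ := hG.nonempty_linkColoring
  have hside : σ.side u x = σ.side u y ∨ σ.side u y = σ.side u z ∨ σ.side u x = σ.side u z := by
    cases σ.side u x <;> cases σ.side u y <;> cases σ.side u z <;> simp
  exact hside.imp (hG.diamondTips_of_side_eq σ hx hy)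
    (Or.imp (hG.diamondTips_of_side_eq σ hy hz) (hG.diamondTips_of_side_eq σ hx hz))

theorem not_adj_of_fan_of_diamond (hux : G.Adj u x) (hus : G.Adj u s) (hut : G.Adj u t)
    (huy : G.Adj u y) (hxs : G.Adj x s) (hst : G.Adj s t) (hty : G.Adj t y) (hpq : G.Adj p q)
    (hpx : G.Adj p x) (hqx : G.Adj q x) (hpy : G.Adj p y) : ¬ G.Adj q y := by
  intro hqy
  obtain ⟨σ⟩ := hG.nonempty_linkColoring
  obtain ⟨z, S, hS, hz⟩ := hG.exists_five_adj ![u, x, s, t, y, p, q] <| by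
    simp [Fin.forall_fin_succ, hux.mem_support_left, hux.mem_support_right, hus.mem_support_right,
      hut.mem_support_right, huy.mem_support_right, hpq.mem_support_left, hpq.mem_support_right]
  have hodd : ∀ S : Finset (Fin 7), 5 ≤ #S → {0, 1, 2} ⊆ S ∨ {0, 2, 3} ⊆ S ∨ {0, 3, 4} ⊆ S ∨
      {5, 6, 1} ⊆ S ∨ {5, 6, 4} ⊆ S ∨ {1, 2, 3, 4, 5} ⊆ S ∨ {1, 2, 3, 4, 6} ⊆ S := by
    decide +kernel
  simp only [insert_subset_iff, singleton_subset_iff] at hodd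
  obtain ⟨h0, h1, h2⟩ | ⟨h0, h2, h3⟩ | ⟨h0, h3, h4⟩ | ⟨h5, h6, h1⟩ | ⟨h5, h6, h4⟩ |
    ⟨h1, h2, h3, h4, h5⟩ | ⟨h1, h2, h3, h4, h6⟩ := hodd S hS
  · exact σ.not_triangle (hz 0 h0) (hz 1 h1) (hz 2 h2) hux hxs hus.symm
  · exact σ.not_triangle (hz 0 h0) (hz 2 h2) (hz 3 h3) hus hst hut.symm
  · exact σ.not_triangle (hz 0 h0) (hz 3 h3) (hz 4 h4) hut hty huy.symm
  · exact σ.not_triangle (hz 5 h5) (hz 6 h6) (hz 1 h1) hpq hqx hpx.symm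
  · exact σ.not_triangle (hz 5 h5) (hz 6 h6) (hz 4 h4) hpq hqy hpy.symm
  · exact σ.not_pentagon (hz 1 h1) (hz 2 h2) (hz 3 h3) (hz 4 h4) (hz 5 h5) hxs hst hty hpy.symm hpx
  · exact σ.not_pentagon (hz 1 h1) (hz 2 h2) (hz 3 h3) (hz 4 h4) (hz 6 h6) hxs hst hty hqy.symm hqx

theorem side_eq_of_diamondTips (hux : G.Adj u x) (huy : G.Adj u y) (h : DiamondTips G x y) :
    σ.side u x = σ.side u y := by
  obtain ⟨p, q, hpq, hpx, hqx, hpy, hqy⟩ := h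
  by_contra hne
  obtain ⟨s, hus, hxs⟩ := hG.exists_adj_adj hux
  have hsy : σ.side u s = σ.side u y :=
    (σ.side_eq_not hux hus hxs).trans (Bool.eq_not.2 (Ne.symm hne)).symm
  obtain ⟨t, hut, hst, hyt⟩ := hG.exists_adj_of_side_eq σ hus huy hsy
  exact hG.not_adj_of_fan_of_diamond hux hus hut huy hxs hst hyt.symm hpq hpx hqx hpy hqy

theorem exists_adj_of_side_eq_of_diamondTips (hyp : G.Adj y p) (hyp' : G.Adj y p')
    (hzp' : G.Adj z p') (hyz : DiamondTips G y z) (hside : σ.side y p = σ.side y p') :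
    ∃ r, G.Adj y r ∧ G.Adj p r ∧ G.Adj p' r ∧ G.Adj z r := by
  have hlarge := hG.lt_card_inter_of_side_eq σ hyp'.symm hzp'.symm
    (hG.side_eq_of_diamondTips σ hyp'.symm hzp'.symm hyz)
  have hsub : (G.neighborFinset p' ∩ G.neighborFinset y) ∩
      (G.neighborFinset p' ∩ G.neighborFinset z) ⊆
      {w ∈ G.neighborFinset y | σ.side y w = !σ.side y p} := by
    rw [hside, inter_comm (G.neighborFinset p')]
    exact inter_subset_left.trans (σ.neighborFinset_inter_subset hyp')
  have := hG.card_lt hyp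
  have := hG.card_side_lt σ hyp.mem_support_left (!σ.side y p)
  obtain ⟨r, hr⟩ := inter_nonempty_of_card_lt_card_add_card
    (σ.neighborFinset_inter_subset hyp) hsub (by omega)
  simp only [mem_inter, G.mem_neighborFinset] at hr
  exact ⟨r, hr.1.1, hr.1.2, hr.2.1.1, hr.2.2.2⟩

theorem not_adj_of_fan_of_triangles (hyq : G.Adj y q) (hyp : G.Adj y p) (hyr : G.Adj y r)
    (hyp' : G.Adj y p') (hqp : G.Adj q p) (hpr : G.Adj p r) (hrp' : G.Adj r p') (hqx : G.Adj q x)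
    (hpx : G.Adj p x) (hrz : G.Adj r z) (hp'z : G.Adj p' z) : ¬ G.Adj x z := by
  intro hxz
  obtain ⟨σ⟩ := hG.nonempty_linkColoring
  obtain ⟨w, S, hS, hw⟩ := hG.exists_five_adj ![y, q, p, r, p', x, z] <| by
    simp [Fin.forall_fin_succ, hyq.mem_support_left, hyq.mem_support_right, hyp.mem_support_right,
      hyr.mem_support_right, hyp'.mem_support_right, hxz.mem_support_left, hxz.mem_support_right]
  have hodd : ∀ S : Finset (Fin 7), 5 ≤ #S → {0, 1, 2} ⊆ S ∨ {0, 2, 3} ⊆ S ∨ {0, 3, 4} ⊆ S ∨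
      {1, 2, 5} ⊆ S ∨ {3, 4, 6} ⊆ S ∨ {0, 1, 5, 6, 4} ⊆ S ∨ {0, 1, 5, 6, 3} ⊆ S ∨
      {0, 2, 5, 6, 4} ⊆ S := by
    decide +kernel
  simp only [insert_subset_iff, singleton_subset_iff] at hodd
  obtain ⟨h0, h1, h2⟩ | ⟨h0, h2, h3⟩ | ⟨h0, h3, h4⟩ | ⟨h1, h2, h5⟩ | ⟨h3, h4, h6⟩ |
    ⟨h0, h1, h5, h6, h4⟩ | ⟨h0, h1, h5, h6, h3⟩ | ⟨h0, h2, h5, h6, h4⟩ := hodd S hS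
  · exact σ.not_triangle (hw 0 h0) (hw 1 h1) (hw 2 h2) hyq hqp hyp.symm
  · exact σ.not_triangle (hw 0 h0) (hw 2 h2) (hw 3 h3) hyp hpr hyr.symm
  · exact σ.not_triangle (hw 0 h0) (hw 3 h3) (hw 4 h4) hyr hrp' hyp'.symm
  · exact σ.not_triangle (hw 1 h1) (hw 2 h2) (hw 5 h5) hqp hpx hqx.symm
  · exact σ.not_triangle (hw 3 h3) (hw 4 h4) (hw 6 h6) hrp' hp'z hrz.symm
  · exact σ.not_pentagon (hw 0 h0) (hw 1 h1) (hw 5 h5) (hw 6 h6) (hw 4 h4)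
      hyq hqx hxz hp'z.symm hyp'.symm
  · exact σ.not_pentagon (hw 0 h0) (hw 1 h1) (hw 5 h5) (hw 6 h6) (hw 3 h3)
      hyq hqx hxz hrz.symm hyr.symm
  · exact σ.not_pentagon (hw 0 h0) (hw 2 h2) (hw 5 h5) (hw 6 h6) (hw 4 h4)
      hyp hpx hxz hp'z.symm hyp'.symm

theorem not_adj_of_diamondTips_of_diamondTips (hxy : DiamondTips G x y) (hyz : DiamondTips G y z) :
    ¬ G.Adj x z := by
  obtain ⟨σ⟩ := hG.nonempty_linkColoring
  obtain ⟨p, q, hpq, hpx, hqx, hpy, hqy⟩ := hxy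
  obtain ⟨p', q', hpq', hpy', hqy', hpz', hqz'⟩ := id hyz
  wlog hside : σ.side y p = σ.side y p' generalizing p' q'
  · have hside' := σ.side_eq_not hpy'.symm hqy'.symm hpq'
    exact this q' p' hpq'.symm hqy' hpy' hqz' hpz'
      ((Bool.eq_not.2 hside).trans hside'.symm)
  obtain ⟨r, hyr, hpr, hpr', hzr⟩ :=
    hG.exists_adj_of_side_eq_of_diamondTips σ hpy.symm hpy'.symm hpz'.symm hyz hside
  exact hG.not_adj_of_fan_of_triangles hqy.symm hpy.symm hyr hpy'.symm hpq.symm hpr hpr'.symm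
    hqx hpx hzr.symm hpz'

theorem diamondTips_trans (hxy : DiamondTips G x y) (hyz : DiamondTips G y z) :
    DiamondTips G x z := by
  obtain ⟨u, hux, huz⟩ := hG.exists_common_adj hxy.left_mem_support hyz.symm.left_mem_support
  obtain ⟨s, hsu, hsy⟩ := hG.exists_common_adj hux.mem_support_left hyz.left_mem_support
  obtain hxs | hsz | hxz := hG.diamondTips_or_of_adj hux hsu.symm huz
  · exact absurd hsy (hG.not_adj_of_diamondTips_of_diamondTips hxs.symm hxy)
  · exact absurd hsy (hG.not_adj_of_diamondTips_of_diamondTips hsz hyz.symm)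
  · exact hxz

theorem not_adj_of_diamondTips_right (hxa : DiamondTips G x a) (hya : DiamondTips G y a) :
    ¬ G.Adj x y :=
  hG.not_adj_of_diamondTips_of_diamondTips hxa hya.symm

theorem exists_diamondTips_triangle (hab : G.Adj a b) (had : G.Adj a d) (hbd : G.Adj b d)
    (hx : x ∈ G.support) : ∃ i, DiamondTips G x (![a, b, d] i) := by
  suffices h : DiamondTips G x a ∨ DiamondTips G x b ∨ DiamondTips G x d by
    simpa [Fin.exists_fin_succ] using h
  obtain ⟨σ⟩ := hG.nonempty_linkColoring
  obtain ⟨u, hux, hua⟩ := hG.exists_common_adj hx hab.mem_support_left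
  obtain ⟨w, huw, haw⟩ := hG.exists_adj_adj hua
  obtain hxa | haw' | hxw := hG.diamondTips_or_of_adj hux hua huw
  · exact .inl hxa
  · exact absurd haw (σ.not_adj_of_diamondTips haw')
  obtain hwb | hbd' | hwd := hG.diamondTips_or_of_adj haw hab had
  · exact .inr (.inl (hG.diamondTips_trans hxw hwb))
  · exact absurd hbd (σ.not_adj_of_diamondTips hbd')
  · exact .inr (.inr (hG.diamondTips_trans hxw hwd))

theorem colorable_three : G.Colorable 3 := by
  by_cases hedge : ∃ a b, G.Adj a b
  swap
  · exact ⟨.mk (fun _ ↦ 0) fun {x y} hxy ↦ absurd ⟨x, y, hxy⟩ hedge⟩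
  obtain ⟨a, b, hab⟩ := hedge
  obtain ⟨d, had, hbd⟩ := hG.exists_adj_adj hab
  have hclass (x : α) : ∃ i, x ∈ G.support → DiamondTips G x (![a, b, d] i) := by
    by_cases hx : x ∈ G.support
    · exact (hG.exists_diamondTips_triangle hab had hbd hx).imp fun _ h _ ↦ h
    · exact ⟨0, fun h ↦ absurd h hx⟩
  choose f hf using hclass
  refine ⟨.mk f fun {x y} hxy hfxy ↦ ?_⟩
  exact hG.not_adj_of_diamondTips_right (hf x hxy.mem_support_left)
    (hfxy ▸ hf y hxy.mem_support_right) hxy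

end IsDenseK4Free

end

/-- The shadow of a `3`-graph as a simple graph. It is irreflexive because `{a, a}` has only one
element. -/
def shadowGraph (H : Finset (Finset V)) : SimpleGraph V where
  Adj a b := {a, b} ∈ sshadow 3 H
  symm := ⟨fun a b h ↦ pair_comm a b ▸ h⟩
  loopless := ⟨fun a h ↦ by simp [sshadow] at h⟩

section

variable {H : Finset (Finset V)} {E : Finset V} {a b : V}

theorem shadowGraph_adj_of_mem (hE : E ∈ H) (ha : a ∈ E) (hb : b ∈ E) (hab : a ≠ b) :
    (shadowGraph H).Adj a b :=
  mem_filter.2 ⟨mem_univ _, card_pair hab, E, hE, by simp [insert_subset_iff, ha, hb]⟩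

theorem nbhd_pair_subset_neighborFinset_inter [DecidableRel (shadowGraph H).Adj]
    (hH : ∀ E ∈ H, #E = 3) (hab : a ≠ b) :
    nbhd H {a, b} ⊆ (shadowGraph H).neighborFinset a ∩ (shadowGraph H).neighborFinset b := by
  intro z hz
  have hzE : {z, a, b} ∈ H := (mem_filter.1 hz).2
  obtain ⟨hza, hzb⟩ : z ≠ a ∧ z ≠ b := by
    suffices z ∉ ({a, b} : Finset V) by simpa using this
    intro hmem
    have := hH _ hzE
    rw [insert_eq_of_mem hmem, card_pair hab] at this
    omega
  simp only [mem_inter, SimpleGraph.mem_neighborFinset]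
  exact ⟨shadowGraph_adj_of_mem hzE (by simp) (by simp) hza.symm,
    shadowGraph_adj_of_mem hzE (by simp) (by simp) hzb.symm⟩

theorem isRPartite_of_colorable_shadowGraph {r : ℕ} (h : (shadowGraph H).Colorable r) :
    IsRPartite r H := by
  obtain ⟨C⟩ := h
  refine ⟨fun i ↦ {v | C v = i}, fun v ↦ ⟨C v, by simp⟩, fun i E hE ↦ card_le_one.2 ?_⟩
  intro x hx y hy
  simp only [mem_inter, mem_filter_univ] at hx hy
  by_contra hxy
  exact C.valid (shadowGraph_adj_of_mem hE hx.1 hy.1 hxy) (hx.2.trans hy.2.symm)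

end

/-- For `n ≥ 7`, every `n`-vertex `3`-graph whose shadow contains no `K_4` and whose
minimum positive codegree exceeds `2n/7` is `3`-partite. -/
theorem stmt15 {V : Type*} [Fintype V] [DecidableEq V] {n : ℕ} (hn : 7 ≤ n)
    (hV : Fintype.card V = n)
    {H : Finset (Finset V)} (hH : ∀ E ∈ H, E.card = 3)
    (hK4 : ¬ ∃ S : Finset V, S.card = 4 ∧
      ∀ a ∈ S, ∀ b ∈ S, a ≠ b → ({a, b} : Finset V) ∈ sshadow 3 H)
    (hdeg : ∀ e ∈ sshadow 3 H, 2 * (n : ℝ) / 7 < ((nbhd H e).card : ℝ)) :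
    IsRPartite 3 H := by
  classical
  have hdense : IsDenseK4Free (shadowGraph H) := by
    refine ⟨fun S hS ↦ hK4 ⟨S, hS.card_eq, fun _ ha _ hb hab ↦ hS.isClique ha hb hab⟩,
      fun a b hab ↦ ?_⟩
    have hcodeg : 2 * (n : ℝ) < 7 * #(nbhd H {a, b}) := by linarith [hdeg _ hab]
    calc 2 * Fintype.card V < 7 * #(nbhd H {a, b}) := by rw [hV]; exact_mod_cast hcodeg
      _ ≤ _ := by gcongr; exact nbhd_pair_subset_neighborFinset_inter hH hab.ne
  exact isRPartite_of_colorable_shadowGraph hdense.colorable_three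
end
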